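/- (Yang–Barron KL bound) Let P and Q be probability measures with densities p, q relative to a common measure μ, with p ≪ q, and let L(z) := log(p(z)/q(z)). Then E_{Z∼P}[max{L(Z), 0}] ≤ KL(P‖Q) + √(2 KL(P‖Q)). -/

import Mathlib

open MeasureTheory Real

/-!
Write `D` for the Kullback-Leibler divergence `KL(P‖Q)`, `x` for the density `dP/dQ` and `L` for
its logarithm. Since `L⁺ = L + L⁻`, it suffices to bound `E_P[L⁻] = E_Q[x L⁻]` by `√(2 D)`. The
inequality `-x log x ≤ 1 - x` gives `x L⁻ ≤ (1 - x)⁺`, and `E_Q[(1 - x)⁺]` is the total variation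
distance between `P` and `Q`. Because only the region `x ≤ 1` matters, the crude form of Pinsker's
inequality that is needed has a pointwise proof: `((1 - x)⁺)² ≤ 2 (x log x + 1 - x)`, and the
right-hand side integrates to `2 D`. The Cauchy-Schwarz inequality concludes.
-/

open InformationTheory

section RealInequalities

variable {x : ℝ}

lemma sq_sub_one_div_two_le_mul_log (hx : 0 ≤ x) (hx_one : x ≤ 1) :
    (x ^ 2 - 1) / 2 ≤ x * log x := by
  obtain rfl | hx_pos := hx.eq_or_lt
  · norm_num
  have sinh_log_le : sinh (log x) ≤ log x := sinh_le_self_iff.2 (log_nonpos hx hx_one)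
  calc (x ^ 2 - 1) / 2 = x * sinh (log x) := by rw [sinh_log hx_pos]; field_simp
    _ ≤ x * log x := by gcongr

lemma sq_posPart_one_sub_le_two_mul_klFun (hx : 0 ≤ x) : (1 - x)⁺ ^ 2 ≤ 2 * klFun x := by
  obtain hx_one | hx_one := le_total x 1
  · rw [posPart_of_nonneg (sub_nonneg.2 hx_one), klFun_apply]
    linarith [sq_sub_one_div_two_le_mul_log hx hx_one]
  · rw [posPart_of_nonpos (sub_nonpos.2 hx_one)]
    simpa using klFun_nonneg hx

lemma mul_negPart_log_le_posPart_one_sub (hx : 0 ≤ x) : x * (log x)⁻ ≤ (1 - x)⁺ :=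
  calc x * (log x)⁻ = (negMulLog x)⁺ := by
        rw [negPart_def, mul_max_of_nonneg _ _ hx, mul_zero, posPart_def, negMulLog_eq_neg,
          mul_neg]
    _ ≤ (1 - x)⁺ := posPart_mono (negMulLog_le_one_sub_self hx)

end RealInequalities

section Measures

variable {Z : Type*} [MeasurableSpace Z]

lemma sq_integral_le_measureReal_univ_mul_integral_sq {μ : Measure Z} [IsFiniteMeasure μ]
    {f : Z → ℝ} (hf : MemLp f 2 μ) :
    (∫ z, f z ∂μ) ^ 2 ≤ μ.real Set.univ * ∫ z, f z ^ 2 ∂μ := by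
  obtain rfl | hμ := eq_zero_or_neZero μ
  · simp
  have mass_pos : 0 < μ.real Set.univ := measureReal_univ_pos
  have jensen : (⨍ z, f z ∂μ) ^ 2 ≤ ⨍ z, f z ^ 2 ∂μ :=
    (even_two.convexOn_pow (𝕜 := ℝ)).map_average_le (by fun_prop) isClosed_univ (by simp)
      (hf.integrable one_le_two) hf.integrable_sq
  rw [average_eq, average_eq, smul_eq_mul, smul_eq_mul, mul_pow] at jensen
  field_simp at jensen
  exact jensen

variable (P Q : Measure Z)

lemma memLp_posPart_one_sub_rnDeriv [IsFiniteMeasure Q] (p : ENNReal) :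
    MemLp (fun z ↦ (1 - (P.rnDeriv Q z).toReal)⁺) p Q := by
  refine MemLp.of_bound (Measurable.aestronglyMeasurable ?_) 1 (ae_of_all _ fun z ↦ ?_)
  · simp only [posPart_def]
    fun_prop
  · rw [norm_of_nonneg (posPart_nonneg _)]
    simp [posPart_def]

variable {P Q}

lemma integral_negPart_llr_le [SigmaFinite P] [IsFiniteMeasure Q] (hac : P ≪ Q) :
    ∫ z, (llr P Q z)⁻ ∂P ≤ ∫ z, (1 - (P.rnDeriv Q z).toReal)⁺ ∂Q := by
  rw [← integral_toReal_rnDeriv_mul hac]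
  exact integral_mono_of_nonneg
    (ae_of_all _ fun z ↦ mul_nonneg ENNReal.toReal_nonneg (negPart_nonneg _))
    ((memLp_posPart_one_sub_rnDeriv P Q 1).integrable le_rfl)
    (ae_of_all _ fun z ↦ mul_negPart_log_le_posPart_one_sub ENNReal.toReal_nonneg)

variable [IsFiniteMeasure P] [IsFiniteMeasure Q]

lemma sq_integral_posPart_one_sub_rnDeriv_le (hac : P ≪ Q) (hint : Integrable (llr P Q) P) :
    (∫ z, (1 - (P.rnDeriv Q z).toReal)⁺ ∂Q) ^ 2
      ≤ 2 * Q.real Set.univ * (klDiv P Q).toReal := by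
  have memLp_two := memLp_posPart_one_sub_rnDeriv P Q 2
  have integrable_klFun := (integrable_klFun_rnDeriv_iff hac).2 hint
  calc (∫ z, (1 - (P.rnDeriv Q z).toReal)⁺ ∂Q) ^ 2
      ≤ Q.real Set.univ * ∫ z, (1 - (P.rnDeriv Q z).toReal)⁺ ^ 2 ∂Q :=
        sq_integral_le_measureReal_univ_mul_integral_sq memLp_two
    _ ≤ Q.real Set.univ * ∫ z, 2 * klFun (P.rnDeriv Q z).toReal ∂Q := by
        refine mul_le_mul_of_nonneg_left ?_ measureReal_nonneg
        exact integral_mono memLp_two.integrable_sq (integrable_klFun.const_mul 2)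
          fun z ↦ sq_posPart_one_sub_le_two_mul_klFun ENNReal.toReal_nonneg
    _ = 2 * Q.real Set.univ * (klDiv P Q).toReal := by
        rw [integral_const_mul, toReal_klDiv_eq_integral_klFun hac]
        ring

theorem yang_barron_kl_bound_general (hac : P ≪ Q) (hint : Integrable (llr P Q) P) :
    ∫ z, (llr P Q z)⁺ ∂P
      ≤ ∫ z, llr P Q z ∂P + √(2 * Q.real Set.univ * (klDiv P Q).toReal) :=
  calc ∫ z, (llr P Q z)⁺ ∂P
      = ∫ z, (llr P Q z + (llr P Q z)⁻) ∂P := by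
        simp only [← sub_eq_iff_eq_add.1 (posPart_sub_negPart _)]
    _ = ∫ z, llr P Q z ∂P + ∫ z, (llr P Q z)⁻ ∂P := integral_add hint hint.neg_part
    _ ≤ ∫ z, llr P Q z ∂P + √(2 * Q.real Set.univ * (klDiv P Q).toReal) := by
        gcongr
        exact (integral_negPart_llr_le hac).trans
          (le_sqrt_of_sq_le (sq_integral_posPart_one_sub_rnDeriv_le hac hint))

end Measures

/-- Yang–Barron KL bound: for probability measures `P ≪ Q` with log-density ratio
`L(z) = log (dP/dQ)(z)` and finite KL divergence `D = E_P[L]`: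
`E_P[max{L, 0}] ≤ D + √(2D)`. -/
theorem yang_barron_kl_bound
    {Z : Type*} [MeasurableSpace Z] (P Q : Measure Z)
    [IsProbabilityMeasure P] [IsProbabilityMeasure Q] (hac : P ≪ Q)
    (hint : Integrable (fun z => Real.log ((P.rnDeriv Q z).toReal)) P) :
    ∫ z, max (Real.log ((P.rnDeriv Q z).toReal)) 0 ∂P
      ≤ (∫ z, Real.log ((P.rnDeriv Q z).toReal) ∂P)
        + Real.sqrt (2 * ∫ z, Real.log ((P.rnDeriv Q z).toReal) ∂P) := by
  simpa [toReal_klDiv_of_measure_eq hac, llr, posPart_def] using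
    yang_barron_kl_bound_general hac hint
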